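/- For every ε ∈ (0,1), every κ ≥ 2, and k = ⌈√(2L)·√(log(8L/ε))⌉ with L = ⌈κ·log(κ/ε)⌉, there exists a polynomial p of degree at most k with nonnegative Chebyshev coefficients summing to at most L such that max over x in [−1, 1−2/κ] of |1/(1−x) − p(x)| < ε/2. -/

import Mathlib

open Finset Polynomial
open scoped NNReal

/-! The Taylor polynomials of `1 / (1 - x)` at `-1` are nonnegative combinations of powers of
`(1 + x) / 2`, and nonnegativity of Chebyshev coefficients is stable under products because
`2 T_m T_n = T_{m+n} + T_{m-n}`. For nonnegative Chebyshev coefficients, the value at `1` is the sum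
of the coefficients, and since `T_l (cosh a) = cosh (l a)` the value at `cosh a` controls the tail
by a Chernoff bound. As `(1 + cosh a) / 2 = cosh (a / 2) ^ 2 ≤ exp (a ^ 2 / 4)`, this tail is
Gaussian, so a Taylor polynomial with `N` terms can be truncated at a degree of order `√N`, up to
a logarithmic factor. The theorem takes `N = 2 L`: the coefficients then sum to at most `L`, and the
Taylor remainder is of order `ε ^ 2 / κ`, which is what makes the final inequality strict. -/

theorem chebyshev_T_mul_T_eq_smul (m n : ℕ) :
    Chebyshev.T ℝ m * Chebyshev.T ℝ n =
      (1 / 2 : ℝ≥0) • (Chebyshev.T ℝ (m + n : ℕ) + Chebyshev.T ℝ ((m : ℤ) - n).natAbs) := by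
  rw [Chebyshev.T_natAbs, Nat.cast_add, ← Chebyshev.T_mul_T, mul_assoc, two_mul, ← two_smul ℝ≥0,
    smul_smul]
  norm_num

theorem mul_mem_span_chebyshev_T {p q : ℝ[X]}
    (hp : p ∈ Submodule.span ℝ≥0 (Set.range fun l : ℕ => Chebyshev.T ℝ l))
    (hq : q ∈ Submodule.span ℝ≥0 (Set.range fun l : ℕ => Chebyshev.T ℝ l)) :
    p * q ∈ Submodule.span ℝ≥0 (Set.range fun l : ℕ => Chebyshev.T ℝ l) := by
  have hpq := Submodule.mul_mem_mul hp hq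
  rw [Submodule.span_mul_span] at hpq
  refine Submodule.span_le.2 ?_ hpq
  rintro _ ⟨_, ⟨m, rfl⟩, _, ⟨n, rfl⟩, rfl⟩
  simp only [chebyshev_T_mul_T_eq_smul]
  exact Submodule.smul_mem _ _ (add_mem (Submodule.subset_span ⟨_, rfl⟩)
    (Submodule.subset_span ⟨_, rfl⟩))

/-- The real polynomials with nonnegative coefficients in the basis of Chebyshev polynomials of the
first kind. Taking `ℝ≥0` as the base semiring makes this convex cone a subalgebra. -/
noncomputable def chebyshevCone : Subalgebra ℝ≥0 ℝ[X] :=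
  (Submodule.span ℝ≥0 (Set.range fun l : ℕ => Chebyshev.T ℝ l)).toSubalgebra
    (Submodule.subset_span ⟨0, by simp⟩) fun _ _ => mul_mem_span_chebyshev_T

theorem X_mem_chebyshevCone : (X : ℝ[X]) ∈ chebyshevCone :=
  Submodule.subset_span ⟨1, by simp⟩

theorem exists_eval_eq_sum_of_mem_chebyshevCone {p : ℝ[X]} (hp : p ∈ chebyshevCone) (n : ℕ) :
    ∃ m ≥ n, ∃ c : ℕ → ℝ, (∀ l, 0 ≤ c l) ∧
      ∀ x, p.eval x = ∑ l ∈ range m, c l * (Chebyshev.T ℝ l).eval x := by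
  obtain ⟨c, rfl⟩ := Finsupp.mem_span_range_iff_exists_finsupp.1 hp
  obtain ⟨m, hm⟩ := c.support.exists_nat_subset_range
  have hsupport : c.support ⊆ range (max m n) :=
    hm.trans (range_subset_range.2 (le_max_left m n))
  refine ⟨max m n, le_max_right m n, fun l => c l, fun l => (c l).coe_nonneg, fun x => ?_⟩
  rw [Finsupp.sum_of_support_subset c hsupport _ (by simp), eval_finsetSum]
  simp [NNReal.smul_def]

theorem abs_sum_mul_chebyshev_T_le {c : ℕ → ℝ} (hc : ∀ l, 0 ≤ c l) (s : Finset ℕ) {x : ℝ}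
    (hx : |x| ≤ 1) :
    |∑ l ∈ s, c l * (Chebyshev.T ℝ l).eval x| ≤ ∑ l ∈ s, c l := by
  refine (abs_sum_le_sum_abs _ _).trans (sum_le_sum fun l _ => ?_)
  rw [abs_mul, abs_of_nonneg (hc l)]
  exact mul_le_of_le_one_right (hc l) (Chebyshev.abs_eval_T_real_le_one _ hx)

theorem sum_Ico_le_sum_mul_chebyshev_T_cosh_div {c : ℕ → ℝ} (hc : ∀ l, 0 ≤ c l) (n m : ℕ) (a : ℝ) :
    ∑ l ∈ Ico n m, c l ≤
      (∑ l ∈ range m, c l * (Chebyshev.T ℝ l).eval (Real.cosh a)) / Real.cosh (n * a) := by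
  rw [le_div_iff₀ (Real.cosh_pos _), sum_mul]
  simp only [Chebyshev.T_real_cosh, Int.cast_natCast]
  calc ∑ l ∈ Ico n m, c l * Real.cosh (n * a)
      ≤ ∑ l ∈ Ico n m, c l * Real.cosh (l * a) := by
        refine sum_le_sum fun l hl => mul_le_mul_of_nonneg_left (Real.cosh_le_cosh.2 ?_) (hc l)
        rw [abs_mul, abs_mul, Nat.abs_cast, Nat.abs_cast]
        gcongr
        exact (mem_Ico.1 hl).1
    _ ≤ ∑ l ∈ range m, c l * Real.cosh (l * a) := by
        exact sum_le_sum_of_subset_of_nonneg (fun l hl => mem_range.2 (mem_Ico.1 hl).2)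
          fun l _ _ => mul_nonneg (hc l) (Real.cosh_pos _).le

theorem exists_chebyshev_truncation {p : ℝ[X]} (hp : p ∈ chebyshevCone) (n : ℕ) :
    ∃ c : ℕ → ℝ, (∀ l, 0 ≤ c l) ∧ (∀ l, n ≤ l → c l = 0) ∧ ∑ l ∈ range n, c l ≤ p.eval 1 ∧
      ∀ a x : ℝ, |x| ≤ 1 → |p.eval x - ∑ l ∈ range n, c l * (Chebyshev.T ℝ l).eval x| ≤
        p.eval (Real.cosh a) / Real.cosh (n * a) := by
  obtain ⟨m, hnm, c, hc, hp_eval⟩ := exists_eval_eq_sum_of_mem_chebyshevCone hp n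
  have htrunc : ∀ l ∈ range n, (if l < n then c l else 0) = c l :=
    fun l hl => if_pos (mem_range.1 hl)
  refine ⟨fun l => if l < n then c l else 0, fun l => ite_nonneg (hc l) le_rfl,
    fun l hl => if_neg hl.not_gt, ?_, fun a x hx => ?_⟩
  · rw [sum_congr rfl htrunc, hp_eval]
    simp only [Chebyshev.T_eval_one, mul_one]
    exact sum_le_sum_of_subset_of_nonneg (range_subset_range.2 hnm) fun l _ _ => hc l
  · rw [sum_congr rfl fun l hl => congrArg (· * _) (htrunc l hl), hp_eval, hp_eval,
      ← sum_range_add_sum_Ico _ hnm, add_sub_cancel_left]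
    exact (abs_sum_mul_chebyshev_T_le hc _ hx).trans
      (sum_Ico_le_sum_mul_chebyshev_T_cosh_div hc n m a)

/-- The Taylor polynomial of `1 / (1 - x)` at `x = -1` with `N` terms, that is,
`∑ t < N, (1 + x) ^ t / 2 ^ (t + 1)`. The scalars are in `ℝ≥0` so that it visibly belongs to
`chebyshevCone`. -/
noncomputable def taylorInvOneSub (N : ℕ) : ℝ[X] :=
  (1 / 2 : ℝ≥0) • ∑ t ∈ range N, ((1 / 2 : ℝ≥0) • (1 + X)) ^ t

theorem taylorInvOneSub_mem_chebyshevCone (N : ℕ) : taylorInvOneSub N ∈ chebyshevCone :=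
  Subalgebra.smul_mem _ (sum_mem fun t _ => pow_mem
    (Subalgebra.smul_mem _ (add_mem (one_mem _) X_mem_chebyshevCone) _) t) _

theorem eval_taylorInvOneSub (N : ℕ) (x : ℝ) :
    (taylorInvOneSub N).eval x = (∑ t ∈ range N, ((1 + x) / 2) ^ t) / 2 := by
  simp [taylorInvOneSub, NNReal.smul_def, eval_finsetSum, div_eq_inv_mul, mul_add]

theorem eval_one_taylorInvOneSub (N : ℕ) : (taylorInvOneSub N).eval 1 = N / 2 := by
  norm_num [eval_taylorInvOneSub]

theorem one_div_one_sub_sub_eval_taylorInvOneSub (N : ℕ) {x : ℝ} (hx : x ≠ 1) :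
    1 / (1 - x) - (taylorInvOneSub N).eval x = ((1 + x) / 2) ^ N / (1 - x) := by
  have hx' : 1 - x ≠ 0 := sub_ne_zero.2 hx.symm
  have hgeom := mul_neg_geom_sum ((1 + x) / 2) N
  rw [eval_taylorInvOneSub]
  field_simp
  linear_combination -2 * hgeom

theorem abs_one_div_one_sub_sub_eval_taylorInvOneSub_le (N : ℕ) {κ x : ℝ} (hκ : 0 < κ)
    (hx : x ∈ Set.Icc (-1) (1 - 2 / κ)) :
    |1 / (1 - x) - (taylorInvOneSub N).eval x| ≤ κ / 2 * Real.exp (-(N / κ)) := by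
  obtain ⟨hx_lower, hx_upper⟩ := hx
  have hgap : 2 / κ ≤ 1 - x := by linarith
  have hgap_pos : 0 < 1 - x := lt_of_lt_of_le (by positivity) hgap
  have hbase : 0 ≤ (1 + x) / 2 := by linarith
  have hbase_le : (1 + x) / 2 ≤ Real.exp (-(1 / κ)) := by
    refine le_trans ?_ (Real.one_sub_le_exp_neg (1 / κ))
    linear_combination hx_upper / 2
  rw [one_div_one_sub_sub_eval_taylorInvOneSub N (by linarith), abs_of_nonneg (by positivity)]
  calc ((1 + x) / 2) ^ N / (1 - x)
      ≤ Real.exp (-(1 / κ)) ^ N / (2 / κ) := by gcongr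
    _ = κ / 2 * Real.exp (-(N / κ)) := by
        rw [← Real.exp_nat_mul, mul_neg, mul_one_div]
        field_simp

theorem one_add_cosh_div_two_le_exp (a : ℝ) : (1 + Real.cosh a) / 2 ≤ Real.exp (a ^ 2 / 4) := by
  have hcosh : Real.cosh a = 2 * Real.cosh (a / 2) ^ 2 - 1 := by
    have htwo := Real.cosh_two_mul (a / 2)
    rw [Real.sinh_sq, mul_div_cancel₀ a two_ne_zero] at htwo
    linarith
  calc (1 + Real.cosh a) / 2 = Real.cosh (a / 2) ^ 2 := by rw [hcosh]; ring
    _ ≤ Real.exp ((a / 2) ^ 2 / 2) ^ 2 :=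
        pow_le_pow_left₀ (Real.cosh_pos _).le (Real.cosh_le_exp_half_sq _) 2
    _ = Real.exp (a ^ 2 / 4) := by rw [← Real.exp_nat_mul]; congr 1; push_cast; ring

theorem eval_cosh_taylorInvOneSub_le (N : ℕ) (a : ℝ) :
    (taylorInvOneSub N).eval (Real.cosh a) ≤ N / 2 * Real.exp (N * (a ^ 2 / 4)) := by
  have hone : 1 ≤ (1 + Real.cosh a) / 2 := by linarith [Real.one_le_cosh a]
  have hterm : ∀ t ∈ range N, ((1 + Real.cosh a) / 2) ^ t ≤ Real.exp (N * (a ^ 2 / 4)) := by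
    intro t ht
    calc ((1 + Real.cosh a) / 2) ^ t ≤ ((1 + Real.cosh a) / 2) ^ N :=
          pow_le_pow_right₀ hone (mem_range.1 ht).le
      _ ≤ Real.exp (a ^ 2 / 4) ^ N :=
          pow_le_pow_left₀ (by linarith) (one_add_cosh_div_two_le_exp a) N
      _ = Real.exp (N * (a ^ 2 / 4)) := (Real.exp_nat_mul _ N).symm
  have hsum := sum_le_card_nsmul _ _ _ hterm
  rw [card_range, nsmul_eq_mul] at hsum
  rw [eval_taylorInvOneSub]
  linarith

theorem exp_div_two_le_cosh (b : ℝ) : Real.exp b / 2 ≤ Real.cosh b := by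
  rw [Real.cosh_eq]
  linarith [Real.exp_pos (-b)]

theorem eval_cosh_taylorInvOneSub_div_cosh_le {N : ℕ} (hN : N ≠ 0) (n : ℕ) :
    (taylorInvOneSub N).eval (Real.cosh (2 * n / N)) / Real.cosh (n * (2 * n / N)) ≤
      N * Real.exp (-((n : ℝ) ^ 2 / N)) := by
  -- This `a` minimises the exponent `N a ^ 2 / 4 - n a`.
  set a : ℝ := 2 * n / N with ha
  have hexponent : N * (a ^ 2 / 4) - n * a = -((n : ℝ) ^ 2 / N) := by
    rw [ha]
    field_simp
    ring
  calc (taylorInvOneSub N).eval (Real.cosh a) / Real.cosh (n * a)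
      ≤ N / 2 * Real.exp (N * (a ^ 2 / 4)) / (Real.exp (n * a) / 2) :=
        div_le_div₀ (by positivity) (eval_cosh_taylorInvOneSub_le N a) (by positivity)
          (exp_div_two_le_cosh _)
    _ = N * Real.exp (-((n : ℝ) ^ 2 / N)) := by
        rw [← hexponent, Real.exp_sub]
        field_simp

theorem exists_chebyshev_approx_inv_one_sub_le {κ : ℝ} (hκ : 0 < κ) {N : ℕ} (hN : N ≠ 0) (n : ℕ) :
    ∃ c : ℕ → ℝ, (∀ l, 0 ≤ c l) ∧ (∀ l, n ≤ l → c l = 0) ∧ ∑ l ∈ range n, c l ≤ N / 2 ∧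
      ∀ x ∈ Set.Icc (-1 : ℝ) (1 - 2 / κ),
        |1 / (1 - x) - ∑ l ∈ range n, c l * (Chebyshev.T ℝ l).eval x| ≤
          κ / 2 * Real.exp (-(N / κ)) + N * Real.exp (-((n : ℝ) ^ 2 / N)) := by
  obtain ⟨c, hc, hc_zero, hc_sum, hc_approx⟩ :=
    exists_chebyshev_truncation (taylorInvOneSub_mem_chebyshevCone N) n
  refine ⟨c, hc, hc_zero, hc_sum.trans_eq (eval_one_taylorInvOneSub N), fun x hx => ?_⟩
  have hx_abs : |x| ≤ 1 := abs_le.2 ⟨hx.1, hx.2.trans (sub_le_self _ (by positivity))⟩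
  exact (abs_sub_le _ ((taylorInvOneSub N).eval x) _).trans (add_le_add
    (abs_one_div_one_sub_sub_eval_taylorInvOneSub_le N hκ hx)
    ((hc_approx _ x hx_abs).trans (eval_cosh_taylorInvOneSub_div_cosh_le hN n)))

theorem exp_neg_le_inv_of_log_le {a b : ℝ} (hb : 0 < b) (h : Real.log b ≤ a) :
    Real.exp (-a) ≤ b⁻¹ := by
  rw [Real.exp_neg]
  exact inv_anti₀ hb ((Real.log_le_iff_le_exp hb).1 h)

theorem mul_exp_neg_two_mul_div_lt {ε κ L : ℝ} (hε : 0 < ε) (hκ : 2 * ε < κ)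
    (hL : κ * Real.log (κ / ε) ≤ L) : κ / 2 * Real.exp (-(2 * L / κ)) < ε / 4 := by
  have hκ_pos : 0 < κ := by linarith
  have hexp : Real.exp (-(L / κ)) ≤ ε / κ := by
    rw [← inv_div κ ε]
    exact exp_neg_le_inv_of_log_le (by positivity) ((le_div_iff₀' hκ_pos).2 hL)
  calc κ / 2 * Real.exp (-(2 * L / κ)) = κ / 2 * Real.exp (-(L / κ)) ^ 2 := by
        rw [← Real.exp_nat_mul]; congr 2; push_cast; ring
    _ ≤ κ / 2 * (ε / κ) ^ 2 := by gcongr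
    _ = ε / 2 * (ε / κ) := by field_simp
    _ < ε / 2 * (1 / 2) := by
        refine mul_lt_mul_of_pos_left ?_ (by positivity)
        rw [div_lt_div_iff₀ hκ_pos two_pos]
        linarith
    _ = ε / 4 := by ring

theorem two_mul_mul_exp_neg_sq_div_le {ε L k : ℝ} (hε : 0 < ε) (hL : 0 < L)
    (hk : √(2 * L) * √(Real.log (8 * L / ε)) ≤ k) :
    2 * L * Real.exp (-(k ^ 2 / (2 * L))) ≤ ε / 4 := by
  rw [← Real.sqrt_mul (by positivity)] at hk
  have hlog : Real.log (8 * L / ε) ≤ k ^ 2 / (2 * L) :=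
    (le_div_iff₀' (by positivity)).2 (Real.sqrt_le_iff.1 hk).2
  calc 2 * L * Real.exp (-(k ^ 2 / (2 * L))) ≤ 2 * L * (8 * L / ε)⁻¹ := by
        gcongr
        exact exp_neg_le_inv_of_log_le (by positivity) hlog
    _ = ε / 4 := by field_simp; norm_num

theorem chebyshev_approx_inv_one_sub_general (eps kappa : ℝ) (heps : 0 < eps)
    (hkappa : 2 * eps < kappa)
    (L k : ℕ) (hLdef : L = ⌈kappa * Real.log (kappa / eps)⌉₊)
    (hkdef : k = ⌈Real.sqrt (2 * L) * Real.sqrt (Real.log (8 * L / eps))⌉₊) :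
    ∃ c : ℕ → ℝ, (∀ l, 0 ≤ c l) ∧ (∀ l, k < l → c l = 0) ∧
      (∑ l ∈ Finset.range (k + 1), c l) ≤ L ∧
      ∀ x ∈ Set.Icc (-1 : ℝ) (1 - 2 / kappa),
        |1 / (1 - x) - ∑ l ∈ Finset.range (k + 1),
            c l * (Polynomial.Chebyshev.T ℝ (l : ℤ)).eval x| < eps / 2 := by
  have hkappa_pos : 0 < kappa := by linarith
  have hlog : 0 < Real.log (kappa / eps) := Real.log_pos ((one_lt_div heps).2 (by linarith))
  have hL : 0 < L := hLdef ▸ Nat.ceil_pos.2 (mul_pos hkappa_pos hlog)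
  obtain ⟨c, hc, hc_zero, hc_sum, hc_approx⟩ :=
    exists_chebyshev_approx_inv_one_sub_le hkappa_pos (N := 2 * L) (by positivity) (k + 1)
  push_cast at hc_sum hc_approx
  refine ⟨c, hc, hc_zero, by linarith, fun x hx => (hc_approx x hx).trans_lt ?_⟩
  have hremainder := mul_exp_neg_two_mul_div_lt heps hkappa (hLdef ▸ Nat.le_ceil _)
  have hk : √(2 * L) * √(Real.log (8 * L / eps)) ≤ (k + 1 : ℝ) :=
    (Nat.le_ceil _).trans (by rw [← hkdef]; linarith)
  have htail := two_mul_mul_exp_neg_sq_div_le heps (Nat.cast_pos.2 hL) hk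
  linarith

/-- Chebyshev polynomial approximation of `1/(1−x)`: for every `ε ∈ (0,1)` and `κ ≥ 2`,
with `L = ⌈κ·log(κ/ε)⌉` and `k = ⌈√(2L)·√(log(8L/ε))⌉`, there exists a polynomial
`p = ∑_{l=0}^{k} c_l T_l` of degree at most `k` with nonnegative Chebyshev coefficients
summing to at most `L`, such that `max_{x ∈ [−1, 1−2/κ]} |1/(1−x) − p(x)| < ε/2`. -/
theorem chebyshev_approx_inv_one_sub (eps kappa : ℝ) (heps : eps ∈ Set.Ioo (0 : ℝ) 1)
    (hkappa : 2 ≤ kappa)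
    (L k : ℕ) (hLdef : L = ⌈kappa * Real.log (kappa / eps)⌉₊)
    (hkdef : k = ⌈Real.sqrt (2 * L) * Real.sqrt (Real.log (8 * L / eps))⌉₊) :
    ∃ c : ℕ → ℝ, (∀ l, 0 ≤ c l) ∧ (∀ l, k < l → c l = 0) ∧
      (∑ l ∈ Finset.range (k + 1), c l) ≤ L ∧
      ∀ x ∈ Set.Icc (-1 : ℝ) (1 - 2 / kappa),
        |1 / (1 - x) - ∑ l ∈ Finset.range (k + 1),
            c l * (Polynomial.Chebyshev.T ℝ (l : ℤ)).eval x| < eps / 2 := by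
  exact chebyshev_approx_inv_one_sub_general eps kappa heps.1 (by linarith [heps.2]) L k hLdef hkdef
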